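/- (Vitali's theorem.) Let Ω ⊆ ℂ be open and connected, and let (f_n)_{n∈ℕ} be a sequence of holomorphic functions on Ω which is locally bounded (every point of Ω has a neighbourhood on which sup_n sup |f_n| < ∞). If the set S := {z ∈ Ω : lim_{n→∞} f_n(z) exists} has an accumulation point in Ω, then (f_n)_{n∈ℕ} converges locally uniformly on Ω (and the limit function is holomorphic on Ω). -/

import Mathlib

open Filter

theorem vitali_equicont
    (Ω : Set ℂ) (hΩopen : IsOpen Ω) (f : ℕ → ℂ → ℂ)
    (hf : ∀ n, DifferentiableOn ℂ (f n) Ω)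
    (hlocbdd : ∀ z ∈ Ω, ∃ U ∈ nhds z, ∃ C : ℝ, ∀ n, ∀ w ∈ U, ‖f n w‖ ≤ C)
    (z : ℂ) (hz : z ∈ Ω) : EquicontinuousAt f z := by
  obtain ⟨U, hU, C, hC⟩ := hlocbdd z hz
  obtain ⟨r, hr, hball⟩ := Metric.mem_nhds_iff.1 (inter_mem hU (hΩopen.mem_nhds hz))
  refine Metric.equicontinuousAt_of_continuity_modulus (fun x => (C + C) / r * dist x z) ?_ f ?_
  · have : Continuous fun x : ℂ => (C + C) / r * dist x z := by fun_prop
    simpa using this.tendsto z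
  · filter_upwards [Metric.ball_mem_nhds z hr] with x hx n
    rw [dist_comm]
    refine Complex.dist_le_div_mul_dist_of_mapsTo_ball
      ((hf n).mono fun y hy => (hball hy).2) ?_ hx
    intro y hy
    rw [Metric.mem_closedBall, dist_eq_norm]
    exact (norm_sub_le _ _).trans
      (add_le_add (hC n y (hball hy).1) (hC n z (mem_of_mem_nhds hU)))

theorem vitali_locunif
    (Ω : Set ℂ) (hΩopen : IsOpen Ω) (f : ℕ → ℂ → ℂ)
    (heq : ∀ z ∈ Ω, EquicontinuousAt f z) (l : Filter ℕ) (g : ℂ → ℂ)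
    (hg : ∀ z ∈ Ω, Tendsto (fun n => f n z) l (nhds (g z))) :
    TendstoLocallyUniformlyOn f g l Ω := by
  rw [tendstoLocallyUniformlyOn_iff_forall_isCompact hΩopen]
  intro K hKΩ hK
  have h := (EquicontinuousOn.tendsto_uniformOnFun_iff_pi' (𝔖 := {K}) (F := f)
    (by simpa using hK)
    (by
      intro K' hK' x hx
      rw [Set.mem_singleton_iff.1 hK'] at hx
      exact (heq x (hKΩ hx)).equicontinuousWithinAt _) l g).2 (by
        rw [tendsto_pi_nhds]
        intro x
        have hx : (x : ℂ) ∈ K := by simpa using x.2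
        exact hg x (hKΩ hx))
  rw [UniformOnFun.tendsto_iff_tendstoUniformlyOn] at h
  exact h K rfl

/-- **Vitali's theorem.** Let `Ω ⊆ ℂ` be open and connected and `(fₙ)` a
locally bounded sequence of holomorphic functions on `Ω`.  If the set of points where
`(fₙ(z))` converges has an accumulation point in `Ω`, then `(fₙ)` converges locally
uniformly on `Ω` to a holomorphic limit. -/
theorem stmt9
    (Ω : Set ℂ) (hΩopen : IsOpen Ω) (hΩconn : IsConnected Ω)
    (f : ℕ → ℂ → ℂ)
    (hf : ∀ n, DifferentiableOn ℂ (f n) Ω)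
    -- local boundedness: every point of Ω has a neighbourhood on which sup_n sup |f_n| < ∞
    (hlocbdd : ∀ z ∈ Ω, ∃ U ∈ nhds z, ∃ C : ℝ, ∀ n, ∀ w ∈ U, ‖f n w‖ ≤ C)
    (S : Set ℂ)
    (hS : S = {z | z ∈ Ω ∧ ∃ l : ℂ, Tendsto (fun n => f n z) atTop (nhds l)})
    -- `S` has an accumulation point in `Ω`
    (hacc : ∃ z₀ ∈ Ω, AccPt z₀ (Filter.principal S)) :
    ∃ g : ℂ → ℂ, DifferentiableOn ℂ g Ω ∧ TendstoLocallyUniformlyOn f g atTop Ω := by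
  subst hS
  obtain ⟨z₀, hz₀, hacc⟩ := hacc
  have heq := vitali_equicont Ω hΩopen f hf hlocbdd
  -- limits along ultrafilters
  have hlim : ∀ u : Ultrafilter ℕ, ∃ g : ℂ → ℂ,
      ∀ z ∈ Ω, Tendsto (fun n => f n z) u (nhds (g z)) := by
    intro u
    have h : ∀ z, ∃ y, z ∈ Ω → Tendsto (fun n => f n z) u (nhds y) := by
      intro z
      by_cases hz : z ∈ Ω
      · obtain ⟨U, hU, C, hC⟩ := hlocbdd z hz
        obtain ⟨y, -, hy⟩ := (isCompact_closedBall (0 : ℂ) C).ultrafilter_le_nhds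
          (u.map fun n => f n z) (by
            rw [le_principal_iff]
            refine Filter.mem_map.2 (univ_mem' fun n => ?_)
            simpa using hC n z (mem_of_mem_nhds hU))
        exact ⟨y, fun _ => hy⟩
      · exact ⟨0, fun h => absurd h hz⟩
    choose g hg using h
    exact ⟨g, hg⟩
  choose G hG using hlim
  have hdiff : ∀ u, DifferentiableOn ℂ (G u) Ω := fun u =>
    (vitali_locunif Ω hΩopen f heq u (G u) (hG u)).differentiableOn
      (Eventually.of_forall hf) hΩopen
  have hEq : ∀ u v : Ultrafilter ℕ, (u : Filter ℕ) ≤ atTop → (v : Filter ℕ) ≤ atTop →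
      Set.EqOn (G u) (G v) Ω := by
    intro u v hu hv
    refine ((hdiff u).analyticOnNhd hΩopen).eqOn_of_preconnected_of_frequently_eq
      ((hdiff v).analyticOnNhd hΩopen) hΩconn.isPreconnected hz₀ ?_
    refine (accPt_iff_frequently_nhdsNE.1 hacc).mono ?_
    rintro z ⟨hz, y, hy⟩
    rw [tendsto_nhds_unique (hG u z hz) (hy.mono_left hu),
      tendsto_nhds_unique (hG v z hz) (hy.mono_left hv)]
  let u₀ : Ultrafilter ℕ := Ultrafilter.of atTop
  have hu₀ : (u₀ : Filter ℕ) ≤ atTop := Ultrafilter.of_le atTop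
  refine ⟨G u₀, hdiff u₀, vitali_locunif Ω hΩopen f heq atTop (G u₀) fun z hz => ?_⟩
  rw [tendsto_iff_ultrafilter]
  intro v hv
  rw [hEq u₀ v hu₀ hv hz]
  exact hG v z hz
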